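/- Let Φ = {φ₁,…,φ_k} be an injective IFS (each φ_i an injective Lipschitz contraction of ℝ) and a ∈ Ω_k. Then the set of parameters δ ∈ ℝ for which the piecewise contraction f_{Φ,a+δ} is not asymptotically periodic has Hausdorff dimension zero. -/

import Mathlib

open Filter Set Topology
open scoped NNReal

noncomputable def pcIdx {k : ℕ} (hk : 2 ≤ k) (a : Fin (k-1) → ℝ) (x : ℝ) : Fin k :=
  ⟨(Finset.univ.filter fun i => a i ≤ x).card, by
    have h := Finset.card_filter_le (Finset.univ : Finset (Fin (k-1))) (fun i => a i ≤ x)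
    simp only [Finset.card_univ, Fintype.card_fin] at h
    omega⟩

/-- The piecewise contraction `f_{Φ,a}` determined by the IFS `φ` and partition points `a`. -/
noncomputable def pc {k : ℕ} (hk : 2 ≤ k) (φ : Fin k → ℝ → ℝ) (a : Fin (k-1) → ℝ) (x : ℝ) : ℝ :=
  φ (pcIdx hk a x) x

/-- `φ_ω = φ_{ω_n} ∘ ⋯ ∘ φ_{ω_1}`. -/
def wcomp {k : ℕ} (φ : Fin k → ℝ → ℝ) {n : ℕ} (ω : Fin n → Fin k) (x : ℝ) : ℝ :=
  (List.ofFn ω).foldl (fun y i => φ i y) x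

/-- `(Φ,a)` has a singular connection: `φ_ω(S_a) ∩ S_a ≠ ∅` for some nonempty word `ω`. -/
def hasSingConn {k : ℕ} (φ : Fin k → ℝ → ℝ) (a : Fin (k-1) → ℝ) : Prop :=
  ∃ n : ℕ, ∃ ω : Fin (n+1) → Fin k, ∃ i j : Fin (k-1), wcomp φ ω (a i) = a j

/-- `max_i |z i|`. -/
noncomputable def maxAbs {k : ℕ} (hk : 2 ≤ k) (z : Fin k → ℝ) : ℝ :=
  Finset.univ.sup' (Finset.univ_nonempty_iff.mpr ⟨⟨0, by omega⟩⟩) fun i => |z i|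

/-- The set of itineraries of order `n` of `(Φ,a)`. -/
noncomputable def itin {k : ℕ} (hk : 2 ≤ k) (φ : Fin k → ℝ → ℝ) (a : Fin (k-1) → ℝ) (n : ℕ) :
    Set (Fin n → Fin k) :=
  {ω | ∃ x : ℝ, (∀ j < n, (pc hk φ a)^[j] x ∉ Set.range a) ∧
       ∀ j : Fin n, ω j = pcIdx hk a ((pc hk φ a)^[(j : ℕ)] x)}

/-- `I^{(n)}_{Φ,a}(ε) = ⋃_{|δ| ≤ ε} I^{(n)}_{Φ,a+δ}`. -/
noncomputable def itinE {k : ℕ} (hk : 2 ≤ k) (φ : Fin k → ℝ → ℝ) (a : Fin (k-1) → ℝ)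
    (ε : ℝ) (n : ℕ) : Set (Fin n → Fin k) :=
  {ω | ∃ δ : ℝ, |δ| ≤ ε ∧ ω ∈ itin hk φ (fun i => a i + δ) n}

/-- `Ω^ε_{Φ,a} = ⋂_{m ≥ 1} closure (⋃_{n ≥ m} ⋃_{ω ∈ I^{(n)}(ε)} {φ_ω(0)})`. -/
noncomputable def omegaSet {k : ℕ} (hk : 2 ≤ k) (φ : Fin k → ℝ → ℝ) (a : Fin (k-1) → ℝ)
    (ε : ℝ) : Set ℝ :=
  ⋂ m : ℕ, closure {y : ℝ | ∃ n, m ≤ n ∧ ∃ ω ∈ itinE hk φ a ε n, wcomp φ ω 0 = y}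

/-- The ω-limit set of `x` under `f`. -/
def omegaLimitPt (f : ℝ → ℝ) (x : ℝ) : Set ℝ :=
  {y | MapClusterPt y Filter.atTop fun n => f^[n] x}

/-- `f` is asymptotically periodic. -/
def AsympPeriodic (f : ℝ → ℝ) : Prop :=
  {x : ℝ | ∃ p : ℕ, 1 ≤ p ∧ f^[p] x = x}.Finite ∧
  ∀ x : ℝ, ∃ z : ℝ, ∃ p : ℕ, 1 ≤ p ∧ f^[p] z = z ∧
    omegaLimitPt f x = Set.range fun j : Fin p => f^[(j : ℕ)] z

/-- `f` is asymptotically periodic on the invariant set `s`. -/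
def AsympPeriodicOn (f : ℝ → ℝ) (s : Set ℝ) : Prop :=
  {x ∈ s | ∃ p : ℕ, 1 ≤ p ∧ f^[p] x = x}.Finite ∧
  ∀ x ∈ s, ∃ z : ℝ, ∃ p : ℕ, 1 ≤ p ∧ f^[p] z = z ∧
    omegaLimitPt f x = Set.range fun j : Fin p => f^[(j : ℕ)] z

/-!
A piecewise contraction `f` that contracts at a uniform scale around an absorbing totally bounded
set `s` with `f s ⊆ s` is asymptotically periodic, by the pigeonhole principle. Applied to the
images `f^[n] '' K` of an absorbing ball `K`, this shows that if `f = pc hk φ (a + δ)` is not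
asymptotically periodic, then for every `n` the orbit of some point of `K` comes within `L ^ n` of
a partition point `a i + δ` after `n` steps. If `w` is the itinerary of this orbit, then `δ` lies
within a constant times `L ^ n` of `φ_w(0) - a i`, so it remains to count itineraries.

Suppose that `(Φ, a + δ₀)` has no singular connection. For each fixed `m`, an orbit for the
parameter `δ₀` meets the partition at most once, hence by compactness all itineraries of length
`m` near a point of `K`, for `δ` near `δ₀`, are among `k` words. Cutting long itineraries into
blocks of length `m` leaves at most `M * k ^ n` of length `n * m`. As `m` is arbitrary, the growth
is subexponential and the resulting covers give dimension zero. The parameters with a singular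
connection are countably many: for each word and each pair of partition points, the connection
determines `δ` as the fixed point of a contraction.
-/

open Function Metric
open scoped Finset

section Pigeonhole

variable {X : Type*} [PseudoMetricSpace X]

theorem exists_ne_dist_lt_of_totallyBounded {α : Type*} [Infinite α] {s : Set X}
    (hs : TotallyBounded s) {u : α → X} (hu : ∀ i, u i ∈ s) {ρ : ℝ} (hρ : 0 < ρ) :
    ∃ i j, i ≠ j ∧ dist (u i) (u j) < ρ := by
  obtain ⟨t, ht, hst⟩ := Metric.totallyBounded_iff.mp hs (ρ / 2) (half_pos hρ)
  choose y hyt hy using fun i => mem_iUnion₂.mp (hst (hu i))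
  have := ht.to_subtype
  obtain ⟨i, j, hij, h⟩ := Finite.exists_ne_map_eq_of_infinite fun i => (⟨y i, hyt i⟩ : t)
  refine ⟨i, j, hij, ?_⟩
  have hyij : y i = y j := congrArg Subtype.val h
  have hi := mem_ball.mp (hy i)
  have hj := mem_ball.mp (hy j)
  rw [← hyij] at hj
  linarith [dist_triangle_right (u i) (u j) (y i)]

end Pigeonhole

section LocalContraction

variable {X : Type*} {f : X → X} {s : Set X}

theorem periodicPts_subset_of_absorbing (hs : MapsTo f s s) (habs : ∀ x, ∃ N, f^[N] x ∈ s) :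
    periodicPts f ⊆ s := by
  rintro x ⟨p, hp, hx⟩
  obtain ⟨N, hN⟩ := habs x
  have hreturn : f^[N * p - N] (f^[N] x) = x := by
    rw [← iterate_add_apply, Nat.sub_add_cancel (Nat.le_mul_of_pos_right N hp)]
    exact hx.const_mul N
  exact hreturn ▸ hs.iterate _ hN

/-- `f` contracts by the factor `L` at scale `ρ` around `s`. Only the first of the two points is
required to lie in `s`, so that the second may be a limit of an orbit in `s`. -/
def ContractsNear [PseudoMetricSpace X] (f : X → X) (s : Set X) (L : ℝ≥0) (ρ : ℝ) : Prop :=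
  ∀ x ∈ s, ∀ y, dist x y < ρ → dist (f x) (f y) ≤ L * dist x y

namespace ContractsNear

variable {L : ℝ≥0} {ρ : ℝ}

theorem dist_iterate_le [PseudoMetricSpace X] (hf : ContractsNear f s L ρ) (hL : L ≤ 1)
    (hs : MapsTo f s s) {x y : X} (hx : x ∈ s) (hxy : dist x y < ρ) (n : ℕ) :
    dist (f^[n] x) (f^[n] y) ≤ L ^ n * dist x y := by
  induction n with
  | zero => simp
  | succ n ih =>
    have hle : (L : ℝ) ^ n * dist x y ≤ dist x y :=
      mul_le_of_le_one_left dist_nonneg (pow_le_one₀ L.coe_nonneg hL)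
    rw [iterate_succ_apply', iterate_succ_apply', pow_succ', mul_assoc]
    exact (hf _ (hs.iterate n hx) _ (ih.trans_lt (hle.trans_lt hxy))).trans (by gcongr)

variable [MetricSpace X]

theorem eq_of_mem_periodicPts (hf : ContractsNear f s L ρ) (hL : L < 1) (hs : MapsTo f s s)
    {x y : X} (hxs : x ∈ s) (hxy : dist x y < ρ) (hx : x ∈ periodicPts f)
    (hy : y ∈ periodicPts f) : x = y := by
  obtain ⟨p, hp, hx⟩ := hx
  obtain ⟨q, hq, hy⟩ := hy
  have hle := hf.dist_iterate_le hL.le hs hxs hxy (p * q)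
  rw [hx.mul_const q, hy.const_mul p] at hle
  have hlt : (L : ℝ) ^ (p * q) < 1 := pow_lt_one₀ L.coe_nonneg hL (by positivity)
  exact dist_le_zero.mp (by nlinarith [dist_nonneg (x := x) (y := y)])

theorem finite_periodicPts (hf : ContractsNear f s L ρ) (hL : L < 1) (hρ : 0 < ρ)
    (hs : MapsTo f s s) (hsb : TotallyBounded s) (habs : ∀ x, ∃ N, f^[N] x ∈ s) :
    (periodicPts f).Finite := by
  by_contra hinf
  have := Set.infinite_coe_iff.mpr hinf
  have hmem := periodicPts_subset_of_absorbing hs habs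
  obtain ⟨x, y, hne, hxy⟩ :=
    exists_ne_dist_lt_of_totallyBounded hsb (fun x : periodicPts f => hmem x.2) hρ
  exact hne (Subtype.ext (hf.eq_of_mem_periodicPts hL hs (hmem x.2) hxy x.2 y.2))

theorem exists_isPeriodicPt_tendsto_of_dist_lt [CompleteSpace X] (hf : ContractsNear f s L ρ)
    (hL : L < 1) (hs : MapsTo f s s) {y : X} (hy : y ∈ s) {p : ℕ} (hp : 0 < p)
    (hyp : dist y (f^[p] y) < ρ) :
    ∃ z, IsPeriodicPt f p z ∧ Tendsto (fun q => f^[q * p] y) atTop (𝓝 z) := by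
  have hLp : (L : ℝ) ^ p < 1 := pow_lt_one₀ L.coe_nonneg hL hp.ne'
  have hcauchy : CauchySeq fun q => f^[q * p] y := by
    refine cauchySeq_of_le_geometric _ (dist y (f^[p] y)) hLp fun q => ?_
    rw [add_mul, one_mul, iterate_add_apply, ← pow_mul', mul_comm (dist _ _)]
    exact hf.dist_iterate_le hL.le hs hy hyp (q * p)
  obtain ⟨z, hz⟩ := cauchySeq_tendsto_of_complete hcauchy
  refine ⟨z, ?_, hz⟩
  have hnext : Tendsto (fun q => f^[p] (f^[q * p] y)) atTop (𝓝 z) := by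
    refine (hz.comp (tendsto_add_atTop_nat 1)).congr fun q => ?_
    rw [comp_apply, add_mul, one_mul, add_comm, iterate_add_apply]
  have hρ : 0 < ρ := dist_nonneg.trans_lt hyp
  have himage : Tendsto (fun q => f^[p] (f^[q * p] y)) atTop (𝓝 (f^[p] z)) := by
    rw [tendsto_iff_dist_tendsto_zero] at hz ⊢
    refine squeeze_zero' (.of_forall fun _ => dist_nonneg) ?_ hz
    filter_upwards [hz.eventually_lt_const hρ] with q hq
    exact (hf.dist_iterate_le hL.le hs (hs.iterate _ hy) hq p).trans
      (mul_le_of_le_one_left dist_nonneg hLp.le)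
  exact tendsto_nhds_unique himage hnext

theorem exists_isPeriodicPt_tendsto_dist [CompleteSpace X] (hf : ContractsNear f s L ρ)
    (hL : L < 1) (hρ : 0 < ρ) (hs : MapsTo f s s) (hsb : TotallyBounded s) {x : X} {N : ℕ}
    (hx : f^[N] x ∈ s) :
    ∃ p > 0, ∃ z, IsPeriodicPt f p z ∧
      ∃ M, Tendsto (fun n => dist (f^[n] (f^[M] x)) (f^[n] z)) atTop (𝓝 0) := by
  obtain ⟨p, hp, M, hM, hMp⟩ :
      ∃ p > 0, ∃ M, f^[M] x ∈ s ∧ dist (f^[M] x) (f^[p] (f^[M] x)) < ρ := by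
    obtain ⟨i, j, hne, hij⟩ :=
      exists_ne_dist_lt_of_totallyBounded hsb (u := fun i : ℕ => f^[i] (f^[N] x))
        (fun i => hs.iterate i hx) hρ
    wlog hlt : i < j generalizing i j
    · exact this j i hne.symm (by rwa [dist_comm]) (hne.symm.lt_of_le (not_lt.mp hlt))
    refine ⟨j - i, Nat.sub_pos_of_lt hlt, i + N, ?_⟩
    rw [iterate_add_apply, ← iterate_add_apply f (j - i) i, Nat.sub_add_cancel hlt.le]
    exact ⟨hs.iterate i hx, hij⟩
  obtain ⟨z, hz, hlim⟩ := hf.exists_isPeriodicPt_tendsto_of_dist_lt hL hs hM hp hMp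
  obtain ⟨q, hq⟩ := ((tendsto_iff_dist_tendsto_zero.mp hlim).eventually_lt_const hρ).exists
  refine ⟨p, hp, z, hz, q * p + M, ?_⟩
  rw [iterate_add_apply]
  refine squeeze_zero (fun _ => dist_nonneg)
    (fun n => hf.dist_iterate_le hL.le hs (hs.iterate _ hM) hq n) ?_
  simpa only [zero_mul] using
    (tendsto_pow_atTop_nhds_zero_of_lt_one L.coe_nonneg hL).mul_const (dist (f^[q * p] (f^[M] x)) z)

end ContractsNear

end LocalContraction

section OmegaLimit

theorem mapClusterPt_of_tendsto_dist {X α : Type*} [PseudoMetricSpace X] {l : Filter α}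
    {u v : α → X} {x : X} (h : Tendsto (fun i => dist (u i) (v i)) l (𝓝 0))
    (hu : MapClusterPt x l u) : MapClusterPt x l v := by
  rw [nhds_basis_ball.mapClusterPt_iff_frequently] at hu ⊢
  intro ε hε
  refine ((hu _ (half_pos hε)).and_eventually (h.eventually_lt_const (half_pos hε))).mono ?_
  rintro i ⟨hui, huvi⟩
  rw [mem_ball] at hui ⊢
  linarith [dist_triangle_left (v i) x (u i)]

variable {f : ℝ → ℝ}

theorem omegaLimitPt_eq_of_tendsto_dist {x y : ℝ}
    (h : Tendsto (fun n => dist (f^[n] x) (f^[n] y)) atTop (𝓝 0)) :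
    omegaLimitPt f x = omegaLimitPt f y :=
  Subset.antisymm (fun _ => mapClusterPt_of_tendsto_dist h)
    (fun _ => mapClusterPt_of_tendsto_dist (by simpa only [dist_comm] using h))

theorem omegaLimitPt_iterate (x : ℝ) (N : ℕ) : omegaLimitPt f (f^[N] x) = omegaLimitPt f x := by
  ext w
  simp only [omegaLimitPt, mem_ofPred_eq, ← iterate_add_apply]
  conv_rhs => rw [← map_add_atTop_eq_nat N]
  exact mapClusterPt_comp (u := fun n => f^[n] x)

theorem omegaLimitPt_of_isPeriodicPt {z : ℝ} {p : ℕ} (hp : 0 < p) (hz : IsPeriodicPt f p z) :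
    omegaLimitPt f z = range fun j : Fin p => f^[(j : ℕ)] z := by
  refine Subset.antisymm (fun w hw => ?_) ?_
  · refine (finite_range _).isClosed.mem_of_mapClusterPt hw (.of_forall fun n => ?_)
    exact ⟨⟨n % p, n.mod_lt hp⟩, hz.iterate_mod_apply n⟩
  · rintro _ ⟨j, rfl⟩
    refine .of_comp (p := atTop) (φ := fun q => j + q * p) ?_ ?_
    · exact tendsto_atTop_mono
        (fun q => (Nat.le_mul_of_pos_right q hp).trans (Nat.le_add_left _ _)) tendsto_id
    · refine Tendsto.mapClusterPt (tendsto_const_nhds.congr fun q => ?_)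
      rw [comp_apply, iterate_add_apply, hz.const_mul q]

theorem AsympPeriodic.of_contractsNear {s : Set ℝ} {L : ℝ≥0} {ρ : ℝ}
    (hf : ContractsNear f s L ρ) (hL : L < 1) (hρ : 0 < ρ) (hs : MapsTo f s s)
    (hsb : TotallyBounded s) (habs : ∀ x, ∃ N, f^[N] x ∈ s) : AsympPeriodic f := by
  refine ⟨hf.finite_periodicPts hL hρ hs hsb habs, fun x => ?_⟩
  obtain ⟨N, hN⟩ := habs x
  obtain ⟨p, hp, z, hz, M, hlim⟩ := hf.exists_isPeriodicPt_tendsto_dist hL hρ hs hsb hN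
  refine ⟨z, p, hp, hz, ?_⟩
  rw [← omegaLimitPt_iterate x M, omegaLimitPt_eq_of_tendsto_dist hlim,
    omegaLimitPt_of_isPeriodicPt hp hz]

end OmegaLimit

section Words

variable {ι X : Type*}

/-- `φ_w = φ_{w_n} ∘ ⋯ ∘ φ_{w_1}` for a word `w = w_1 ⋯ w_n`, as in `wcomp`, with the length of the
word not fixed in advance. -/
def wordMap (φ : ι → X → X) (w : List ι) (x : X) : X :=
  w.foldl (fun y i => φ i y) x

/-- The piecewise map which applies `φ i` to the points `x` with code `c x = i`; the piecewise
contraction `pc hk φ a` is the instance `c = pcIdx hk a`. -/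
def codedMap (φ : ι → X → X) (c : X → ι) (x : X) : X :=
  φ (c x) x

/-- The itinerary of order `n` of `x`: the codes of the first `n` points of the orbit of `x` under
`codedMap φ c`. Unlike in `itin`, the orbit may meet the discontinuities of `c`. -/
def itinerary (φ : ι → X → X) (c : X → ι) (n : ℕ) (x : X) : List ι :=
  (List.iterate (codedMap φ c) x n).map c

variable (φ : ι → X → X) (c : X → ι)

theorem wordMap_cons (i : ι) (w : List ι) (x : X) : wordMap φ (i :: w) x = wordMap φ w (φ i x) :=
  rfl

theorem length_itinerary (n : ℕ) (x : X) : (itinerary φ c n x).length = n := by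
  simp [itinerary]

theorem itinerary_succ (n : ℕ) (x : X) :
    itinerary φ c (n + 1) x = c x :: itinerary φ c n (codedMap φ c x) :=
  rfl

theorem itinerary_add (m n : ℕ) (x : X) :
    itinerary φ c (m + n) x = itinerary φ c m x ++ itinerary φ c n ((codedMap φ c)^[m] x) := by
  simp [itinerary, List.iterate_add]

theorem wordMap_itinerary (n : ℕ) (x : X) :
    wordMap φ (itinerary φ c n x) x = (codedMap φ c)^[n] x := by
  induction n generalizing x with
  | zero => rfl
  | succ n ih => rw [itinerary_succ, wordMap_cons, iterate_succ_apply, ← ih]; rfl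

variable {φ}

theorem lipschitzWith_wordMap [PseudoEMetricSpace X] {L : ℝ≥0} (hφ : ∀ i, LipschitzWith L (φ i))
    (w : List ι) : LipschitzWith (L ^ w.length) (wordMap φ w) := by
  induction w with
  | nil => exact LipschitzWith.id
  | cons i w ih => exact ih.comp (hφ i)

theorem mapsTo_wordMap {K : Set X} (hK : ∀ i, MapsTo (φ i) K K) (w : List ι) :
    MapsTo (wordMap φ w) K K := by
  induction w with
  | nil => exact mapsTo_id K
  | cons i w ih => exact ih.comp (hK i)

theorem mapsTo_codedMap {K : Set X} (hK : ∀ i, MapsTo (φ i) K K) : MapsTo (codedMap φ c) K K :=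
  fun x hx => hK (c x) hx

theorem exists_mapsTo_closedBall_forall_exists_iterate_mem [PseudoMetricSpace X] [Finite ι]
    {L : ℝ≥0} (hL : L < 1) (hφ : ∀ i, LipschitzWith L (φ i)) (x₀ : X) :
    ∃ R : ℝ≥0, (∀ i, MapsTo (φ i) (closedBall x₀ R) (closedBall x₀ R)) ∧
      ∀ (c : X → ι) (x : X), ∃ N, (codedMap φ c)^[N] x ∈ closedBall x₀ R := by
  cases nonempty_fintype ι
  set C : ℝ≥0 := ∑ i, nndist (φ i x₀) x₀
  have hL' : (0 : ℝ) < 1 - L := sub_pos.mpr hL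
  obtain ⟨Q, hQ⟩ : ∃ Q : ℝ≥0, (C : ℝ) = (1 - L) * Q :=
    ⟨⟨C / (1 - L), by positivity⟩, (mul_div_cancel₀ _ hL'.ne').symm⟩
  -- `Q` is the fixed point of the bound `q ↦ L q + C` for one step.
  have hstep (i : ι) (x : X) : dist (φ i x) x₀ - Q ≤ L * (dist x x₀ - Q) := by
    have hC : dist (φ i x₀) x₀ ≤ C :=
      mod_cast Finset.single_le_sum (f := fun i => nndist (φ i x₀) x₀) (by simp) (Finset.mem_univ i)
    linarith [dist_triangle (φ i x) (φ i x₀) x₀, (hφ i).dist_le_mul x x₀]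
  have hsteps (c : X → ι) (x : X) (n : ℕ) :
      dist ((codedMap φ c)^[n] x) x₀ - Q ≤ L ^ n * (dist x x₀ - Q) := by
    induction n with
    | zero => simp
    | succ n ih =>
      rw [iterate_succ_apply', pow_succ', mul_assoc]
      exact (hstep _ _).trans (by gcongr)
  refine ⟨Q + 1, fun i x hx => ?_, fun c x => ?_⟩
  · rw [mem_closedBall, NNReal.coe_add, NNReal.coe_one] at hx ⊢
    nlinarith [hstep i x, L.coe_nonneg]
  · have hlim : Tendsto (fun n => (L : ℝ) ^ n * (dist x x₀ - Q)) atTop (𝓝 0) := by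
      simpa only [zero_mul] using
        (tendsto_pow_atTop_nhds_zero_of_lt_one L.coe_nonneg hL).mul_const (dist x x₀ - Q)
    obtain ⟨N, hN⟩ := (hlim.eventually_lt_const one_pos).exists
    refine ⟨N, ?_⟩
    rw [mem_closedBall, NNReal.coe_add, NNReal.coe_one]
    linarith [hsteps c x N]

end Words

section PiecewiseContraction

variable {k : ℕ} {φ : Fin k → ℝ → ℝ} {a b : Fin (k - 1) → ℝ} {x y : ℝ}

theorem pcIdx_eq_of_forall_dist_lt (hk : 2 ≤ k) (h : ∀ i, dist (y - b i) (x - a i) < |x - a i|) :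
    pcIdx hk b y = pcIdx hk a x := by
  have hiff (i : Fin (k - 1)) : b i ≤ y ↔ a i ≤ x := by
    have hi := h i
    rw [Real.dist_eq, abs_lt] at hi
    rcases abs_cases (x - a i) with h' | h' <;> constructor <;> intro <;> linarith
  simp only [pcIdx, hiff]

theorem eventually_pcIdx_eq (hk : 2 ≤ k) (hx : x ∉ range a) :
    ∀ᶠ q : (Fin (k - 1) → ℝ) × ℝ in 𝓝 (a, x), pcIdx hk q.1 q.2 = pcIdx hk a x := by
  have hnear (i : Fin (k - 1)) : ∀ᶠ q : (Fin (k - 1) → ℝ) × ℝ in 𝓝 (a, x),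
      dist (q.2 - q.1 i) (x - a i) < |x - a i| := by
    have hcont : Continuous fun q : (Fin (k - 1) → ℝ) × ℝ => q.2 - q.1 i := by fun_prop
    exact hcont.continuousAt (ball_mem_nhds _ (abs_sub_pos.mpr fun h => hx ⟨i, h.symm⟩))
  filter_upwards [eventually_all.mpr hnear] with q hq
  exact pcIdx_eq_of_forall_dist_lt hk hq

theorem contractsNear_pc (hk : 2 ≤ k) {L : ℝ≥0} (hφ : ∀ i, LipschitzWith L (φ i)) {s : Set ℝ}
    {ρ : ℝ} (hs : ∀ x ∈ s, ∀ i, ρ ≤ dist x (a i)) : ContractsNear (pc hk φ a) s L ρ := by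
  intro x hx y hxy
  have hidx : pcIdx hk a y = pcIdx hk a x := pcIdx_eq_of_forall_dist_lt hk fun i => by
    rw [dist_sub_right, dist_comm, ← Real.dist_eq]
    exact hxy.trans_le (hs x hx i)
  rw [pc, pc, hidx]
  exact (hφ _).dist_le_mul x y

theorem exists_dist_lt_of_not_asympPeriodic (hk : 2 ≤ k) {L : ℝ≥0} (hL : L < 1)
    (hφ : ∀ i, LipschitzWith L (φ i)) {K : Set ℝ} (hKb : TotallyBounded K)
    (hK : ∀ i, MapsTo (φ i) K K) (habs : ∀ x, ∃ N, (pc hk φ a)^[N] x ∈ K)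
    (ha : ¬AsympPeriodic (pc hk φ a)) (n : ℕ) {ρ : ℝ} (hρ : 0 < ρ) :
    ∃ x ∈ K, ∃ i, dist ((pc hk φ a)^[n] x) (a i) < ρ := by
  by_contra! hfar
  set f := pc hk φ a
  have hf : MapsTo f K K := mapsTo_codedMap (pcIdx hk a) hK
  refine ha (AsympPeriodic.of_contractsNear (s := f^[n] '' K)
    (contractsNear_pc hk hφ (forall_mem_image.mpr hfar)) hL hρ ?_ ?_ fun x => ?_)
  · rintro _ ⟨x, hx, rfl⟩
    exact ⟨f x, hf hx, (iterate_succ_apply f n x).symm.trans (iterate_succ_apply' f n x)⟩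
  · exact hKb.subset (hf.iterate n).image_subset
  · obtain ⟨N, hN⟩ := habs x
    exact ⟨n + N, f^[N] x, hN, (iterate_add_apply f n N x).symm⟩

theorem hasSingConn_iff_exists_list :
    hasSingConn φ a ↔ ∃ w : List (Fin k), w ≠ [] ∧ ∃ i j, wordMap φ w (a i) = a j := by
  constructor
  · rintro ⟨n, ω, i, j, h⟩
    exact ⟨List.ofFn ω, by simp, i, j, h⟩
  · rintro ⟨w, hw, i, j, h⟩
    obtain ⟨i₀, w, rfl⟩ := List.exists_cons_of_ne_nil hw
    exact ⟨w.length, (i₀ :: w).get, i, j, by rwa [wcomp, List.ofFn_get]⟩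

end PiecewiseContraction

section CountingItineraries

variable {ι X P : Type*} {φ : ι → X → X} {c : P → X → ι} {K S : Set X} {p₀ : P}

section Local

variable [TopologicalSpace X] [TopologicalSpace P]

theorem eventually_itinerary_eq (hφ : ∀ i, Continuous (φ i))
    (hc : ∀ x ∉ S, ∀ᶠ q : P × X in 𝓝 (p₀, x), c q.1 q.2 = c p₀ x) {n : ℕ} {x : X}
    (hx : ∀ w, wordMap φ w x ∉ S) :
    ∀ᶠ q : P × X in 𝓝 (p₀, x), itinerary φ (c q.1) n q.2 = itinerary φ (c p₀) n x := by
  induction n generalizing x with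
  | zero => exact .of_forall fun _ => rfl
  | succ n ih =>
    have hstep : Continuous fun q : P × X => (q.1, φ (c p₀ x) q.2) := by fun_prop
    filter_upwards [hc x (hx []),
      hstep.continuousAt.eventually (ih (x := codedMap φ (c p₀) x) fun w => hx (c p₀ x :: w))]
      with q hq hq'
    rw [itinerary_succ, itinerary_succ, ← hq', codedMap, hq]

/-- The only choice in an itinerary near `x` is made when the orbit of `x` meets `S`, which happens
at most once. -/
theorem exists_finset_eventually_itinerary_mem [Fintype ι] (hφ : ∀ i, Continuous (φ i))
    (hc : ∀ x ∉ S, ∀ᶠ q : P × X in 𝓝 (p₀, x), c q.1 q.2 = c p₀ x)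
    (hS : ∀ x ∈ S, ∀ w ≠ [], wordMap φ w x ∉ S) (n : ℕ) (x : X) :
    ∃ F : Finset (List ι), #F ≤ Fintype.card ι ∧
      ∀ᶠ q : P × X in 𝓝 (p₀, x), itinerary φ (c q.1) n q.2 ∈ F := by
  classical
  induction n generalizing x with
  | zero =>
    have : Nonempty ι := ⟨c p₀ x⟩
    exact ⟨{[]}, Fintype.card_pos, .of_forall fun _ => Finset.mem_singleton_self _⟩
  | succ n ih =>
    have hstep (i : ι) : Continuous fun q : P × X => (q.1, φ i q.2) := by fun_prop
    by_cases hx : x ∈ S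
    · refine ⟨Finset.univ.image fun i => i :: itinerary φ (c p₀) n (φ i x),
        Finset.card_image_le, ?_⟩
      have hafter (i : ι) : ∀ᶠ q : P × X in 𝓝 (p₀, x),
          itinerary φ (c q.1) n (φ i q.2) = itinerary φ (c p₀) n (φ i x) :=
        ((hstep i).tendsto (p₀, x)).eventually (eventually_itinerary_eq hφ hc fun w =>
          hS x hx (i :: w) (List.cons_ne_nil i w))
      filter_upwards [eventually_all.mpr hafter] with q hq
      rw [itinerary_succ, codedMap, hq]
      exact Finset.mem_image_of_mem _ (Finset.mem_univ _)
    · obtain ⟨F, hF, hmem⟩ := ih (φ (c p₀ x) x)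
      refine ⟨F.image (List.cons (c p₀ x)), Finset.card_image_le.trans hF, ?_⟩
      filter_upwards [hc x hx, (hstep _).continuousAt.eventually hmem] with q hq hq'
      rw [itinerary_succ, codedMap, hq]
      exact Finset.mem_image_of_mem _ hq'

end Local

theorem exists_pos_forall_ball_prod_subset_of_isCompact {α : Type*} [PseudoMetricSpace X]
    [PseudoMetricSpace P] (hK : IsCompact K) {A : α → Set (P × X)}
    (hA : ∀ x ∈ K, ∃ i, A i ∈ 𝓝 (p₀, x)) :
    ∃ r > 0, ∀ x ∈ K, ∃ i, ball p₀ r ×ˢ ball x r ⊆ A i := by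
  obtain ⟨r, hr, hball⟩ := lebesgue_number_lemma_of_metric (s := {p₀} ×ˢ K)
    (c := fun i => interior (A i)) (isCompact_singleton.prod hK) (fun _ => isOpen_interior) <| by
      rintro ⟨p, x⟩ ⟨rfl, hx⟩
      obtain ⟨i, hi⟩ := hA x hx
      exact mem_iUnion.mpr ⟨i, mem_interior_iff_mem_nhds.mpr hi⟩
  refine ⟨r, hr, fun x hx => ?_⟩
  obtain ⟨i, hi⟩ := hball (p₀, x) ⟨rfl, hx⟩
  exact ⟨i, (ball_prod_same p₀ x r).trans_subset (hi.trans interior_subset)⟩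

theorem exists_finset_card_le_pow_itinerary_mem [PseudoMetricSpace X]
    (hφ : ∀ i, LipschitzWith 1 (φ i)) (hK : ∀ i, MapsTo (φ i) K K) {U : Set P} {r : ℝ} {N m : ℕ}
    (hloc : ∀ x₀ ∈ K, ∃ F : Finset (List ι), #F ≤ N ∧
      ∀ p ∈ U, ∀ x ∈ ball x₀ r, itinerary φ (c p) m x ∈ F)
    (n : ℕ) {x₀ : X} (hx₀ : x₀ ∈ K) :
    ∃ F : Finset (List ι), #F ≤ N ^ n ∧
      ∀ p ∈ U, ∀ x ∈ ball x₀ r, itinerary φ (c p) (n * m) x ∈ F := by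
  classical
  induction n generalizing x₀ with
  | zero => exact ⟨{[]}, by simp, fun _ _ _ _ => by simp [itinerary]⟩
  | succ n ih =>
    obtain ⟨F, hF, hmem⟩ := hloc x₀ hx₀
    choose G hG hGmem using fun w : List ι => ih (mapsTo_wordMap hK w hx₀)
    refine ⟨F.biUnion fun w => (G w).image (w ++ ·), ?_, fun p hp x hx => ?_⟩
    · calc _ ≤ #F * N ^ n :=
            Finset.card_biUnion_le_card_mul _ _ _ fun w _ => Finset.card_image_le.trans (hG w)
        _ ≤ N ^ (n + 1) := by rw [pow_succ']; gcongr
    · set w := itinerary φ (c p) m x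
      have hnear : (codedMap φ (c p))^[m] x ∈ ball (wordMap φ w x₀) r := by
        rw [← wordMap_itinerary, mem_ball]
        have hle := (lipschitzWith_wordMap hφ w).dist_le_mul x x₀
        rw [one_pow, NNReal.coe_one, one_mul] at hle
        exact hle.trans_lt hx
      rw [add_mul, one_mul, add_comm, itinerary_add]
      exact Finset.mem_biUnion.mpr
        ⟨w, hmem p hp x hx, Finset.mem_image_of_mem _ (hGmem w p hp _ hnear)⟩

theorem exists_nhds_card_itinerary_le [PseudoMetricSpace X] [PseudoMetricSpace P] [Fintype ι]
    (hφ : ∀ i, LipschitzWith 1 (φ i)) (hKc : IsCompact K) (hK : ∀ i, MapsTo (φ i) K K)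
    (hc : ∀ x ∉ S, ∀ᶠ q : P × X in 𝓝 (p₀, x), c q.1 q.2 = c p₀ x)
    (hS : ∀ x ∈ S, ∀ w ≠ [], wordMap φ w x ∉ S) (m : ℕ) :
    ∃ U ∈ 𝓝 p₀, ∃ M : ℕ, ∀ n, ∃ F : Finset (List ι), #F ≤ M * Fintype.card ι ^ n ∧
      ∀ p ∈ U, ∀ x ∈ K, itinerary φ (c p) (n * m) x ∈ F := by
  classical
  obtain ⟨r, hr, hloc⟩ := exists_pos_forall_ball_prod_subset_of_isCompact hKc
    (A := fun F : {F : Finset (List ι) // #F ≤ Fintype.card ι} =>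
      {q : P × X | itinerary φ (c q.1) m q.2 ∈ F.1}) fun x _ => by
    obtain ⟨F, hF, hmem⟩ :=
      exists_finset_eventually_itinerary_mem (fun i => (hφ i).continuous) hc hS m x
    exact ⟨⟨F, hF⟩, hmem⟩
  obtain ⟨T, hTK, hTfin, hKT⟩ := hKc.finite_cover_balls hr
  refine ⟨ball p₀ r, ball_mem_nhds _ hr, #hTfin.toFinset, fun n => ?_⟩
  choose! F hF hmem using fun x₀ (hx₀ : x₀ ∈ K) =>
    exists_finset_card_le_pow_itinerary_mem hφ hK (fun x₀ hx₀ => by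
      obtain ⟨F, hmem⟩ := hloc x₀ hx₀
      exact ⟨F.1, F.2, fun p hp x hx => hmem (mk_mem_prod hp hx)⟩) n hx₀
  refine ⟨hTfin.toFinset.biUnion F, ?_, fun p hp x hx => ?_⟩
  · exact Finset.card_biUnion_le_card_mul _ _ _ fun x₀ hx₀ =>
      hF x₀ (hTK (hTfin.mem_toFinset.mp hx₀))
  · obtain ⟨x₀, hx₀, hxx₀⟩ := mem_iUnion₂.mp (hKT hx)
    exact Finset.mem_biUnion.mpr
      ⟨x₀, hTfin.mem_toFinset.mpr hx₀, hmem x₀ (hTK hx₀) p hp x hxx₀⟩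

end CountingItineraries

section HausdorffDimension

theorem exists_mul_pow_rpow_le_one (N : ℝ≥0) {d : ℝ} (hd : 0 < d) {L : ℝ≥0} (hL : L < 1) :
    ∃ m, L ^ m < 1 ∧ N * (L ^ m) ^ d ≤ 1 := by
  have hlim : Tendsto (fun m : ℕ => N * (L ^ d) ^ m) atTop (𝓝 0) := by
    simpa only [mul_zero] using (NNReal.tendsto_pow_atTop_nhds_zero_of_lt_one
      (NNReal.rpow_lt_one hL hd)).const_mul N
  obtain ⟨m, hm, hNm⟩ :=
    ((eventually_gt_atTop 0).and (hlim.eventually_lt_const one_pos)).exists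
  refine ⟨m, pow_lt_one' hL hm.ne', ?_⟩
  rw [← NNReal.rpow_natCast_mul, mul_comm (m : ℝ), NNReal.rpow_mul_natCast]
  exact hNm.le

variable {X : Type*} [EMetricSpace X] {s : Set X}

theorem dimH_le_of_forall_finset_approx {C ρ : ℝ≥0} (hρ : ρ < 1) {M N : ℕ} {d : ℝ≥0}
    (hd : N * ρ ^ (d : ℝ) ≤ 1) {t : ℕ → Finset X} (ht : ∀ n, #(t n) ≤ M * N ^ n)
    (hst : ∀ n, ∀ x ∈ s, ∃ y ∈ t n, edist x y ≤ ↑(C * ρ ^ n)) : dimH s ≤ d := by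
  borelize X
  have hradius : Tendsto (fun n => ((2 * (C * ρ ^ n) : ℝ≥0) : ENNReal)) atTop (𝓝 0) := by
    rw [← ENNReal.coe_zero, ENNReal.tendsto_coe]
    simpa only [mul_zero] using
      ((NNReal.tendsto_pow_atTop_nhds_zero_of_lt_one hρ).const_mul C).const_mul 2
  have hdiam (n : ℕ) (y : t n) :
      ediam (closedEBall y.1 ↑(C * ρ ^ n)) ≤ ↑(2 * (C * ρ ^ n)) := by
    simpa only [ENNReal.coe_mul, ENNReal.coe_ofNat] using
      ediam_closedEBall_le (x := y.1) (r := ↑(C * ρ ^ n))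
  have hcover (n : ℕ) : s ⊆ ⋃ y : t n, closedEBall y.1 ↑(C * ρ ^ n) := fun x hx => by
    obtain ⟨y, hy, hxy⟩ := hst n x hx
    exact mem_iUnion.mpr ⟨⟨y, hy⟩, hxy⟩
  have hcard (n : ℕ) : #(t n) * (2 * (C * ρ ^ n)) ^ (d : ℝ) ≤ M * (2 * C) ^ (d : ℝ) :=
    calc #(t n) * (2 * (C * ρ ^ n)) ^ (d : ℝ)
      _ ≤ (M * N ^ n) * (2 * (C * ρ ^ n)) ^ (d : ℝ) := by gcongr; exact_mod_cast ht n
      _ = M * (2 * C) ^ (d : ℝ) * (N * ρ ^ (d : ℝ)) ^ n := by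
        rw [← mul_assoc 2, NNReal.mul_rpow, ← NNReal.rpow_natCast_mul,
          mul_comm (n : ℝ), NNReal.rpow_mul_natCast]
        ring
      _ ≤ M * (2 * C) ^ (d : ℝ) := mul_le_of_le_one_right' (pow_le_one' hd n)
  refine dimH_le_of_hausdorffMeasure_ne_top (ne_top_of_le_ne_top
    (ENNReal.coe_ne_top (r := M * (2 * C) ^ (d : ℝ))) ?_)
  refine (MeasureTheory.Measure.hausdorffMeasure_le_liminf_sum _ s _ hradius
    (fun n (y : t n) => closedEBall y.1 ↑(C * ρ ^ n)) (.of_forall hdiam) (.of_forall hcover)).trans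
    (liminf_le_of_frequently_le' (.of_forall fun n => ?_))
  calc ∑ y : t n, ediam (closedEBall y.1 ↑(C * ρ ^ n)) ^ (d : ℝ)
    _ ≤ ∑ _ : t n, ((2 * (C * ρ ^ n) : ℝ≥0) : ENNReal) ^ (d : ℝ) := by
      gcongr with y
      exact hdiam n y
    _ = ↑(#(t n) * (2 * (C * ρ ^ n)) ^ (d : ℝ)) := by
      rw [Finset.sum_const, Finset.card_univ, Fintype.card_coe, nsmul_eq_mul,
        ← ENNReal.coe_rpow_of_nonneg _ d.coe_nonneg, ← ENNReal.coe_natCast, ← ENNReal.coe_mul]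
    _ ≤ ↑(M * (2 * C) ^ (d : ℝ)) := ENNReal.coe_le_coe.mpr (hcard n)

theorem dimH_le_of_forall_exists_mem_nhdsWithin [SecondCountableTopology X] {d : ENNReal}
    (h : ∀ x ∈ s, ∃ t ∈ 𝓝[s] x, dimH t ≤ d) : dimH s ≤ d := by
  by_contra! hlt
  obtain ⟨x, hx, hxt⟩ := exists_mem_nhdsWithin_lt_dimH_of_lt_dimH hlt
  obtain ⟨t, ht, hle⟩ := h x hx
  exact (hxt t ht).not_ge hle

end HausdorffDimension

theorem subsingleton_setOf_add_eq_add {E : Type*} [NormedAddCommGroup E] {L : ℝ≥0} {g : E → E}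
    (hL : L < 1) (hg : LipschitzWith L g) (x y : E) : {δ | g (x + δ) = y + δ}.Subsingleton := by
  intro δ hδ δ' hδ'
  have hle := hg.dist_le_mul (x + δ) (x + δ')
  rw [hδ, hδ', dist_add_left, dist_add_left] at hle
  exact dist_le_zero.mp
    (by nlinarith [NNReal.coe_lt_one.mpr hL, dist_nonneg (x := δ) (y := δ')])

section Parameters

variable {k : ℕ} {φ : Fin k → ℝ → ℝ} {L : ℝ≥0} (a : Fin (k - 1) → ℝ)

theorem countable_setOf_hasSingConn_add (hL : L < 1) (hφ : ∀ i, LipschitzWith L (φ i)) :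
    {δ : ℝ | hasSingConn φ fun i => a i + δ}.Countable := by
  have hsub : {δ : ℝ | hasSingConn φ fun i => a i + δ} ⊆
      ⋃ w ∈ {w : List (Fin k) | w ≠ []}, ⋃ i, ⋃ j, {δ | wordMap φ w (a i + δ) = a j + δ} := by
    intro δ hδ
    obtain ⟨w, hw, i, j, h⟩ := hasSingConn_iff_exists_list.mp hδ
    exact mem_biUnion hw (mem_iUnion₂.mpr ⟨i, j, h⟩)
  refine Countable.mono hsub ?_
  refine (to_countable _).biUnion fun w hw => countable_iUnion fun i => countable_iUnion fun j => ?_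
  have hLw : L ^ w.length < 1 := pow_lt_one' hL (List.length_pos_iff.mpr hw).ne'
  exact (subsingleton_setOf_add_eq_add hLw (lipschitzWith_wordMap hφ w) _ _).countable

variable (hk : 2 ≤ k)

/-- The partitions `a` such that, for every `n`, some point of `s`, which may depend on `n`, is
within `L ^ n` of a partition point after `n` steps of `pc hk φ a`. -/
def nearSingularPartitions (φ : Fin k → ℝ → ℝ) (s : Set ℝ) (L : ℝ≥0) : Set (Fin (k - 1) → ℝ) :=
  {a | ∀ n, ∃ x ∈ s, ∃ i, dist ((pc hk φ a)^[n] x) (a i) ≤ L ^ n}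

variable {a hk} {R : ℝ≥0}

theorem exists_dist_wordMap_sub_le (hφ : ∀ i, LipschitzWith L (φ i)) {δ : ℝ}
    (hδ : (fun i => a i + δ) ∈ nearSingularPartitions hk φ (closedBall 0 R) L) (n : ℕ) :
    ∃ x ∈ closedBall 0 (R : ℝ), ∃ i,
      dist δ (wordMap φ (itinerary φ (pcIdx hk fun i => a i + δ) n x) 0 - a i) ≤
        (1 + R) * L ^ n := by
  obtain ⟨x, hx, i, hi⟩ := hδ n
  refine ⟨x, hx, i, ?_⟩
  set w := itinerary φ (pcIdx hk fun i => a i + δ) n x with hw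
  have horbit : (pc hk φ fun i => a i + δ)^[n] x = wordMap φ w x := (wordMap_itinerary φ _ n x).symm
  have hword : dist (wordMap φ w x) (wordMap φ w 0) ≤ L ^ n * R := by
    have hle := (lipschitzWith_wordMap hφ w).dist_le_mul_of_le hx
    rwa [hw, length_itinerary, ← hw] at hle
  calc dist δ (wordMap φ w 0 - a i)
    _ = dist (a i + δ) (wordMap φ w 0) := by rw [Real.dist_eq, Real.dist_eq]; congr 1; ring
    _ ≤ dist (wordMap φ w x) (a i + δ) + dist (wordMap φ w x) (wordMap φ w 0) :=
      dist_triangle_left _ _ _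
    _ ≤ L ^ n + L ^ n * R := add_le_add (horbit ▸ hi) hword
    _ = (1 + R) * L ^ n := by ring

theorem exists_nhds_dimH_nearSingular_inter_le (hL : L < 1) (hφ : ∀ i, LipschitzWith L (φ i))
    (hR : ∀ i, MapsTo (φ i) (closedBall 0 R) (closedBall 0 R)) {δ₀ : ℝ}
    (hδ₀ : ¬hasSingConn φ fun i => a i + δ₀) {d : ℝ≥0} (hd : 0 < d) :
    ∃ U ∈ 𝓝 δ₀,
      dimH ({δ | (fun i => a i + δ) ∈ nearSingularPartitions hk φ (closedBall 0 R) L} ∩ U) ≤ d := by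
  classical
  obtain ⟨m, hLm, hkm⟩ := exists_mul_pow_rpow_le_one k (NNReal.coe_pos.mpr hd) hL
  have hS : ∀ x ∈ range (fun i => a i + δ₀), ∀ w ≠ [], wordMap φ w x ∉ range fun i => a i + δ₀ := by
    rintro _ ⟨i, rfl⟩ w hw ⟨j, hj⟩
    exact hδ₀ (hasSingConn_iff_exists_list.mpr ⟨w, hw, i, j, hj.symm⟩)
  obtain ⟨V, hV, M, hcount⟩ := exists_nhds_card_itinerary_le (fun i => (hφ i).weaken hL.le)
    (isCompact_closedBall 0 (R : ℝ)) hR (fun x hx => eventually_pcIdx_eq hk hx) hS m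
  choose F hF hmem using hcount
  have hcont : Continuous fun δ : ℝ => fun i => a i + δ := by fun_prop
  refine ⟨_, hcont.continuousAt hV, dimH_le_of_forall_finset_approx (C := 1 + R) hLm hkm
    (M := M * (k - 1))
    (t := fun n => (F n ×ˢ Finset.univ).image fun p => wordMap φ p.1 0 - a p.2)
    (fun n => ?_) fun n δ hδ => ?_⟩
  · calc _ ≤ #(F n) * (k - 1) := by
          simpa using Finset.card_image_le (s := F n ×ˢ Finset.univ)
            (f := fun p => wordMap φ p.1 0 - a p.2)
      _ ≤ M * k ^ n * (k - 1) := by gcongr; simpa using hF n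
      _ = M * (k - 1) * k ^ n := by ring
  · obtain ⟨x, hx, i, hi⟩ := exists_dist_wordMap_sub_le hφ hδ.1 (n * m)
    refine ⟨_, Finset.mem_image_of_mem _
      (Finset.mk_mem_product (hmem n _ hδ.2 x hx) (Finset.mem_univ i)), ?_⟩
    rw [edist_nndist, ENNReal.coe_le_coe, ← NNReal.coe_le_coe, coe_nndist, ← pow_mul, mul_comm m]
    exact_mod_cast hi

theorem dimH_nearSingular_diff_hasSingConn_eq_zero (hL : L < 1) (hφ : ∀ i, LipschitzWith L (φ i))
    (hR : ∀ i, MapsTo (φ i) (closedBall 0 R) (closedBall 0 R)) :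
    dimH ({δ | (fun i => a i + δ) ∈ nearSingularPartitions hk φ (closedBall 0 R) L} \
      {δ | hasSingConn φ fun i => a i + δ}) = 0 := by
  refine le_antisymm (ENNReal.le_of_forall_pos_le_add fun d hd _ => ?_) zero_le
  rw [zero_add]
  refine dimH_le_of_forall_exists_mem_nhdsWithin fun δ₀ hδ₀ => ?_
  obtain ⟨U, hU, hdim⟩ := exists_nhds_dimH_nearSingular_inter_le (hk := hk) hL hφ hR hδ₀.2 hd
  exact ⟨_ \ _ ∩ U, inter_mem_nhdsWithin _ hU,
    (dimH_mono (inter_subset_inter_left U sdiff_subset)).trans hdim⟩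

end Parameters

theorem stmt18_general {k : ℕ} (hk : 2 ≤ k) (φ : Fin k → ℝ → ℝ) (lam : ℝ≥0) (hlam : lam < 1)
    (hlip : ∀ i, LipschitzWith lam (φ i)) (a : Fin (k - 1) → ℝ) :
    dimH {δ : ℝ | ¬AsympPeriodic (pc hk φ fun i => a i + δ)} = 0 := by
  -- `lam` may be `0`, whereas the scales `L ^ n` have to be positive.
  obtain ⟨L, hL₀, hL, hφ⟩ : ∃ L : ℝ≥0, 0 < L ∧ L < 1 ∧ ∀ i, LipschitzWith L (φ i) :=
    ⟨max lam 2⁻¹, by positivity, max_lt hlam (inv_lt_one_of_one_lt₀ one_lt_two),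
      fun i => (hlip i).weaken (le_max_left _ _)⟩
  obtain ⟨R, hR, habs⟩ := exists_mapsTo_closedBall_forall_exists_iterate_mem hL hφ 0
  set B := {δ : ℝ | hasSingConn φ fun i => a i + δ}
  set A := {δ : ℝ | (fun i => a i + δ) ∈ nearSingularPartitions hk φ (closedBall 0 R) L}
  have hsub : {δ : ℝ | ¬AsympPeriodic (pc hk φ fun i => a i + δ)} ⊆ A := fun δ hδ n => by
    obtain ⟨x, hx, i, hi⟩ := exists_dist_lt_of_not_asympPeriodic hk hL hφ
      (isCompact_closedBall 0 (R : ℝ)).totallyBounded hR (habs _) hδ n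
      (pow_pos (NNReal.coe_pos.mpr hL₀) n)
    exact ⟨x, hx, i, hi.le⟩
  refine le_antisymm ?_ zero_le
  calc dimH {δ : ℝ | ¬AsympPeriodic (pc hk φ fun i => a i + δ)}
    _ ≤ dimH (A \ B ∪ B) := dimH_mono (hsub.trans (sdiff_union_self.symm ▸ subset_union_left))
    _ = 0 := by
      rw [dimH_union, dimH_nearSingular_diff_hasSingConn_eq_zero hL hφ hR,
        (countable_setOf_hasSingConn_add a hL hφ).dimH_zero, max_self]

/-- Theorem B -/
theorem stmt18 {k : ℕ} (hk : 2 ≤ k) (φ : Fin k → ℝ → ℝ) (lam : ℝ≥0) (hlam : lam < 1)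
    (hlip : ∀ i, LipschitzWith lam (φ i)) (hinj : ∀ i, Function.Injective (φ i))
    (a : Fin (k-1) → ℝ) (ha : StrictMono a) :
    dimH {δ : ℝ | ¬ AsympPeriodic (pc hk φ (fun i => a i + δ))} = 0 := by
  exact stmt18_general hk φ lam hlam hlip a
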